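/- Define K : ℝ × ℝ → ℝ by K(x, y) = 1 + (x − 1/2)(y − 1/2) + (|x − y|² − |x − y| + 1/6)/2. Fix an integer n ≥ 2 and define weights w*_0 = 6n²/(12n³ + n + 3), w*_k = 12n²/(12n³ + n + 3) for 1 ≤ k ≤ n − 2, and w*_{n-1} = 18n²/(12n³ + n + 3). Then ∫_0^1 (1 − ∑_{k=0}^{n-1} w*_k K(x, k/n))² dx = 6n(n + 15)/(5(12n³ + n + 3)²). -/

import Mathlib

open MeasureTheory

/-- The reproducing kernel `K^1_{1,1}` of the first-order unweighted Sobolev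
space on `[0,1]`. -/
noncomputable def sobKernel (x y : ℝ) : ℝ :=
  1 + (x - 1/2) * (y - 1/2) + (|x - y| ^ 2 - |x - y| + 1/6) / 2

/-- The optimal kernel cubature weights for the left-Riemann nodes `t_k = k/n`. -/
noncomputable def wstar (n k : ℕ) : ℝ :=
  if k = 0 then 6 * (n : ℝ) ^ 2 / (12 * (n : ℝ) ^ 3 + n + 3)
  else if k = n - 1 then 18 * (n : ℝ) ^ 2 / (12 * (n : ℝ) ^ 3 + n + 3)
  else 12 * (n : ℝ) ^ 2 / (12 * (n : ℝ) ^ 3 + n + 3)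

theorem sobKernel_eq_max (x y : ℝ) :
    sobKernel x y = 4 / 3 + (x ^ 2 + y ^ 2) / 2 - max x y := by
  unfold sobKernel
  rcases le_total x y with h | h
  · rw [max_eq_right h, abs_of_nonpos (by linarith)]
    ring
  · rw [max_eq_left h, abs_of_nonneg (by linarith)]
    ring

theorem sum_wstar_mul (n : ℕ) (hn : 2 ≤ n) (f : ℕ → ℝ) :
    ∑ k ∈ Finset.range n, wstar n k * f k =
      12 * (n : ℝ) ^ 2 / (12 * (n : ℝ) ^ 3 + n + 3) *
        (∑ k ∈ Finset.range n, f k - f 0 / 2 + f (n - 1) / 2) := by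
  have hw : ∀ k, wstar n k * f k = 12 * (n : ℝ) ^ 2 / (12 * (n : ℝ) ^ 3 + n + 3) *
      (f k - (if k = 0 then f k / 2 else 0) + (if k = n - 1 then f k / 2 else 0)) := by
    intro k
    unfold wstar
    split_ifs with h₀ h₁
    · omega
    all_goals ring
  simp_rw [hw]
  rw [← Finset.mul_sum, Finset.sum_add_distrib, Finset.sum_sub_distrib, Finset.sum_ite_eq',
    Finset.sum_ite_eq', if_pos (Finset.mem_range.2 (by omega)),
    if_pos (Finset.mem_range.2 (by omega))]

theorem sum_range_max {j : ℕ} {y : ℝ} (h₁ : (j : ℝ) ≤ y) (h₂ : y ≤ j + 1) {m : ℕ}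
    (hm : j + 1 ≤ m) :
    ∑ k ∈ Finset.range m, max y (k : ℝ) =
      (j + 1) * y + (m : ℝ) * (m - 1) / 2 - (j : ℝ) * (j + 1) / 2 := by
  induction m, hm using Nat.le_induction with
  | base =>
    have : ∀ k ∈ Finset.range (j + 1), max y (k : ℝ) = y := fun k hk => by
      have : (k : ℝ) ≤ j := by exact_mod_cast Nat.lt_succ_iff.1 (Finset.mem_range.1 hk)
      exact max_eq_left (this.trans h₁)
    rw [Finset.sum_congr rfl this]
    simp
    ring
  | succ m hm ih =>
    have : ((j : ℝ) + 1) ≤ m := by exact_mod_cast hm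
    rw [Finset.sum_range_succ, ih, max_eq_right (h₂.trans this)]
    push_cast
    ring

theorem sum_range_sq (m : ℕ) :
    ∑ k ∈ Finset.range m, (k : ℝ) ^ 2 = (m : ℝ) * (m - 1) * (2 * m - 1) / 6 := by
  induction m with
  | zero => simp
  | succ m ih =>
    rw [Finset.sum_range_succ, ih]
    push_cast
    ring

theorem sobKernel_div {n : ℕ} (hn : 0 < n) (x : ℝ) (k : ℕ) :
    sobKernel x ((k : ℝ) / n) =
      4 / 3 + x ^ 2 / 2 + (1 / (2 * (n : ℝ) ^ 2)) * (k : ℝ) ^ 2 - (1 / n) * max (n * x) k := by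
  have hn' : (0 : ℝ) < n := by exact_mod_cast hn
  rw [sobKernel_eq_max, mul_max_of_nonneg _ _ (by positivity)]
  field_simp
  ring

theorem sum_sobKernel {n j : ℕ} (hj : j < n) {x : ℝ} (h₁ : (j : ℝ) ≤ n * x)
    (h₂ : n * x ≤ j + 1) :
    ∑ k ∈ Finset.range n, sobKernel x ((k : ℝ) / n) =
      n * (4 / 3 + x ^ 2 / 2) + (1 / (2 * (n : ℝ) ^ 2)) * (n * (n - 1) * (2 * n - 1) / 6) -
        (1 / n) * ((j + 1) * (n * x) + (n : ℝ) * (n - 1) / 2 - (j : ℝ) * (j + 1) / 2) := by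
  simp_rw [sobKernel_div (Nat.zero_lt_of_lt hj)]
  rw [Finset.sum_sub_distrib, Finset.sum_add_distrib, ← Finset.mul_sum, ← Finset.mul_sum,
    sum_range_max h₁ h₂ hj, sum_range_sq, Finset.sum_const, Finset.card_range, nsmul_eq_mul]

/-- The interpolation error of the constant `1` on an interval between two consecutive nodes. -/
theorem residual_of_lt {n j : ℕ} (hn : 2 ≤ n) (hj : j + 1 < n) {x : ℝ} (h₁ : (j : ℝ) ≤ n * x)
    (h₂ : n * x ≤ j + 1) :
    1 - ∑ k ∈ Finset.range n, wstar n k * sobKernel x ((k : ℝ) / n) =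
      6 * n / (12 * (n : ℝ) ^ 3 + n + 3) * ((n * x - j) * (1 - (n * x - j))) := by
  have hn' : (0 : ℝ) < n := by exact_mod_cast (by omega : 0 < n)
  have hD : 12 * (n : ℝ) ^ 3 + n + 3 ≠ 0 := by positivity
  have hj' : (j : ℝ) + 1 ≤ n - 1 := by
    have : (j : ℝ) + 1 + 1 ≤ n := by exact_mod_cast hj
    linarith
  rw [sum_wstar_mul n hn, sum_sobKernel (by omega) h₁ h₂, sobKernel_div (by omega),
    sobKernel_div (by omega), Nat.cast_pred (by omega), max_eq_right (h₂.trans hj'),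
    Nat.cast_zero, max_eq_left ((Nat.cast_nonneg j).trans h₁)]
  field_simp
  ring

/-- The interpolation error of the constant `1` to the right of the last node. -/
theorem residual_last {n j : ℕ} (hn : 2 ≤ n) (hj : j + 1 = n) {x : ℝ} (h₁ : (j : ℝ) ≤ n * x)
    (h₂ : n * x ≤ j + 1) :
    1 - ∑ k ∈ Finset.range n, wstar n k * sobKernel x ((k : ℝ) / n) =
      6 * n / (12 * (n : ℝ) ^ 3 + n + 3) * ((n * x - j) * (2 - (n * x - j))) := by
  have hn' : (0 : ℝ) < n := by exact_mod_cast (by omega : 0 < n)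
  have hD : 12 * (n : ℝ) ^ 3 + n + 3 ≠ 0 := by positivity
  have hj' : (j : ℝ) = n - 1 := by
    have : (j : ℝ) + 1 = n := by exact_mod_cast hj
    linarith
  rw [sum_wstar_mul n hn, sum_sobKernel (by omega) h₁ h₂, sobKernel_div (by omega),
    sobKernel_div (by omega), Nat.cast_pred (by omega), Nat.cast_zero,
    max_eq_left ((Nat.cast_nonneg j).trans h₁), max_eq_left (hj'.symm.le.trans h₁), hj']
  field_simp
  ring

theorem integral_sq_mul_sub (C a : ℝ) :
    ∫ s in (0 : ℝ)..1, (C * (s * (a - s))) ^ 2 = C ^ 2 * (a ^ 2 / 3 - a / 2 + 1 / 5) := by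
  rw [intervalIntegral.integral_eq_sub_of_hasDerivAt
    (f := fun s => C ^ 2 * (a ^ 2 / 3 * s ^ 3 - a / 2 * s ^ 4 + 1 / 5 * s ^ 5))]
  · ring
  · intro s _
    have h := ((((hasDerivAt_pow 3 s).const_mul (a ^ 2 / 3)).sub
      ((hasDerivAt_pow 4 s).const_mul (a / 2))).add
      ((hasDerivAt_pow 5 s).const_mul (1 / 5))).const_mul (C ^ 2)
    refine h.congr_deriv ?_
    norm_num
    ring
  · exact Continuous.intervalIntegrable (by fun_prop) _ _

/-- Rescaling of the integral over a single mesh interval to the unit interval. -/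
theorem integral_mesh_interval {n : ℕ} (hn : 0 < n) (j : ℕ) {f g : ℝ → ℝ}
    (hfg : ∀ x, (j : ℝ) ≤ n * x → n * x ≤ j + 1 → f x = g (n * x - j)) :
    ∫ x in ((j : ℝ) / n)..(((j + 1 : ℕ) : ℝ) / n), f x = (1 / n) * ∫ s in (0 : ℝ)..1, g s := by
  have hn' : (0 : ℝ) < n := by exact_mod_cast hn
  have hle : (j : ℝ) / n ≤ ((j + 1 : ℕ) : ℝ) / n := by
    gcongr
    simp
  have hcongr : ∫ x in ((j : ℝ) / n)..(((j + 1 : ℕ) : ℝ) / n), f x =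
      ∫ x in ((j : ℝ) / n)..(((j + 1 : ℕ) : ℝ) / n), g (n * x - j) := by
    refine intervalIntegral.integral_congr fun x hx => ?_
    rw [Set.uIcc_of_le hle, Set.mem_Icc, div_le_iff₀ hn', le_div_iff₀ hn'] at hx
    push_cast at hx
    exact hfg x (by linarith) (by linarith)
  rw [hcongr, intervalIntegral.integral_comp_mul_sub g hn'.ne']
  have h0 : (n : ℝ) * (j / n) - j = 0 := by field_simp; ring
  have h1 : (n : ℝ) * (((j + 1 : ℕ) : ℝ) / n) - j = 1 := by push_cast; field_simp; ring
  rw [h0, h1, smul_eq_mul, one_div]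

/-- Proof of Lemma 2: `‖h − h_T^{w*}‖²_{L²(0,1)} = 6n(n+15)/(5(12n³+n+3)²)`. -/
theorem stmt_15 (n : ℕ) (hn : 2 ≤ n) :
    ∫ x in (0 : ℝ)..1,
        (1 - ∑ k ∈ Finset.range n, wstar n k * sobKernel x ((k : ℝ) / n)) ^ 2
      = 6 * (n : ℝ) * (n + 15) / (5 * (12 * (n : ℝ) ^ 3 + n + 3) ^ 2) := by
  have hn' : (0 : ℝ) < n := by exact_mod_cast (by omega : 0 < n)
  have hD : 12 * (n : ℝ) ^ 3 + n + 3 ≠ 0 := by positivity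
  set f : ℝ → ℝ := fun x =>
    (1 - ∑ k ∈ Finset.range n, wstar n k * sobKernel x ((k : ℝ) / n)) ^ 2
  have hcont : Continuous f := by
    unfold f sobKernel
    fun_prop
  have hsplit := intervalIntegral.sum_integral_adjacent_intervals (f := f) (μ := volume)
    (a := fun k : ℕ => (k : ℝ) / n) (n := n) fun k _ => hcont.intervalIntegrable _ _
  simp only [Nat.cast_zero, zero_div, div_self hn'.ne'] at hsplit
  rw [← hsplit]
  obtain ⟨m, rfl⟩ : ∃ m, n = m + 1 := ⟨n - 1, by omega⟩
  set C : ℝ := 6 * ((m + 1 : ℕ) : ℝ) / (12 * ((m + 1 : ℕ) : ℝ) ^ 3 + (m + 1 : ℕ) + 3) with hC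
  rw [Finset.sum_range_succ, Finset.sum_congr rfl fun j hj =>
    integral_mesh_interval (by omega) j (g := fun s => (C * (s * (1 - s))) ^ 2) fun x h₁ h₂ =>
      congrArg (· ^ 2) (residual_of_lt hn (by simpa using hj) h₁ h₂),
    integral_mesh_interval (by omega) m (g := fun s => (C * (s * (2 - s))) ^ 2) fun x h₁ h₂ =>
      congrArg (· ^ 2) (residual_last hn rfl h₁ h₂)]
  simp only [integral_sq_mul_sub, Finset.sum_const, Finset.card_range, nsmul_eq_mul]
  have hm : (m : ℝ) = ((m + 1 : ℕ) : ℝ) - 1 := by push_cast; ring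
  rw [hm, hC]
  generalize ((m + 1 : ℕ) : ℝ) = N at *
  field_simp
  ring
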